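/- There is a universal constant C > 0 such that the following holds. Let (X,d) be a metric space with doubling dimension at most k, equipped with hierarchical nets {N_i}_{i∈[L]} with parameter s ≥ 4 and net-respecting parameter ε ∈ (0,1). Let W = (T, π) be a prize-collecting instance with finite terminal set T ⊆ X and penalties π : T → [0,∞), and let F be a minimum-cost net-respecting solution for W (a finite connected multigraph with vertices in X, which is additionally Eulerian in the PCTSP case, with cost c_W(F) = w(F) + Σ_{v ∈ T∖V(F)} π(v)). Then for every i ∈ [L], every u ∈ N_i, every t ≥ 1, and every net-respecting feasible solution G of the sub-instance W_u^{(i,t+1)} whose terminal set is T ∩ B(u,(t+1)s^i) with the same penalties π, one has w(F|_{B(u, t s^i)}) ≤ c_{W_u^{(i,t+1)}}(G) + (C·s·k·t/ε)^{C·k} · s^i, where F|_B denotes the set of edges of F with both endpoints in B and w denotes total edge weight. -/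

import Mathlib

open scoped Classical

/-- The weight of an (undirected) edge, given by the metric. -/
noncomputable def edgeLen {X : Type*} [MetricSpace X] : Sym2 X → ℝ :=
  Sym2.lift ⟨fun x y => dist x y, fun x y => dist_comm x y⟩

/-- The vertex set covered by a multiset of edges. -/
def mVerts {X : Type*} (F : Multiset (Sym2 X)) : Set X := {x | ∃ e ∈ F, x ∈ e}

/-- The total edge weight of a multiset of edges (with multiplicity). -/
noncomputable def mWeight {X : Type*} [MetricSpace X] (F : Multiset (Sym2 X)) : ℝ :=
  (F.map edgeLen).sum

/-- The simple graph induced by a multiset of edges. -/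
def mGraph {X : Type*} (F : Multiset (Sym2 X)) : SimpleGraph X :=
  SimpleGraph.fromEdgeSet {e | e ∈ F}

/-- The multigraph `F` is connected on the vertices it covers. -/
def MConnected {X : Type*} (F : Multiset (Sym2 X)) : Prop :=
  ∀ x ∈ mVerts F, ∀ y ∈ mVerts F, (mGraph F).Reachable x y

/-- The degree of `v` in the edge multiset `F` (self-loops count twice). -/
noncomputable def mDegree {X : Type*} (F : Multiset (Sym2 X)) (v : X) : ℕ :=
  (F.filter (fun e => v ∈ e)).card + (F.filter (fun e => e = s(v, v))).card

/-- `F` is Eulerian: every covered vertex has even degree. -/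
def MEulerian {X : Type*} (F : Multiset (Sym2 X)) : Prop :=
  ∀ v ∈ mVerts F, Even (mDegree F v)

/-- `F` is net-respecting w.r.t. the hierarchical nets `N` and parameter `ε`. -/
def MNetRespecting {X : Type*} [MetricSpace X] (N : ℕ → Set X) (sc ε : ℝ)
    (F : Multiset (Sym2 X)) : Prop :=
  ∀ x y : X, s(x, y) ∈ F → ∀ i : ℕ,
    sc ^ i ≤ ε * dist x y → ε * dist x y < sc ^ (i + 1) → x ∈ N i ∧ y ∈ N i

/-- The prize-collecting cost of `F` for terminals `T` with penalties `π`: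
edge weight plus penalties of uncovered terminals. -/
noncomputable def pcCost {X : Type*} [MetricSpace X] (T : Finset X) (π : X → ℝ)
    (F : Multiset (Sym2 X)) : ℝ :=
  mWeight F + ∑ v ∈ T.filter (fun v => v ∉ mVerts F), π v

/-- The edges of `F` with both endpoints in the closed ball `B(u,r)`. -/
noncomputable def restrictBall {X : Type*} [MetricSpace X] (F : Multiset (Sym2 X))
    (u : X) (r : ℝ) : Multiset (Sym2 X) :=
  F.filter (fun e => ∀ x ∈ e, x ∈ Metric.closedBall u r)


section Basics
variable {X : Type*}

lemma mVerts_add (F G : Multiset (Sym2 X)) : mVerts (F + G) = mVerts F ∪ mVerts G := by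
  ext x
  simp only [mVerts, Multiset.mem_add, Set.mem_ofPred_eq, Set.mem_union]
  constructor
  · rintro ⟨e, h | h, hx⟩
    · exact Or.inl ⟨e, h, hx⟩
    · exact Or.inr ⟨e, h, hx⟩
  · rintro (⟨e, h, hx⟩ | ⟨e, h, hx⟩)
    · exact ⟨e, Or.inl h, hx⟩
    · exact ⟨e, Or.inr h, hx⟩

lemma mVerts_mono {F G : Multiset (Sym2 X)} (h : F ≤ G) : mVerts F ⊆ mVerts G := by
  rintro x ⟨e, he, hx⟩
  exact ⟨e, Multiset.mem_of_le h he, hx⟩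

lemma mGraph_mono {F G : Multiset (Sym2 X)} (h : F ≤ G) : mGraph F ≤ mGraph G := by
  apply SimpleGraph.fromEdgeSet_mono
  intro e he
  exact Multiset.mem_of_le h he

lemma mWeight_add [MetricSpace X] (F G : Multiset (Sym2 X)) :
    mWeight (F + G) = mWeight F + mWeight G := by
  simp [mWeight]

lemma edgeLen_nonneg [MetricSpace X] (e : Sym2 X) : 0 ≤ edgeLen e := by
  induction e with | _ x y => exact dist_nonneg

lemma mWeight_nonneg [MetricSpace X] (F : Multiset (Sym2 X)) : 0 ≤ mWeight F := by
  apply Multiset.sum_nonneg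
  intro a ha
  obtain ⟨e, _, rfl⟩ := Multiset.mem_map.1 ha
  exact edgeLen_nonneg e

lemma mWeight_mono [MetricSpace X] {F G : Multiset (Sym2 X)} (h : F ≤ G) :
    mWeight F ≤ mWeight G := by
  obtain ⟨H, rfl⟩ := Multiset.le_iff_exists_add.1 h
  rw [mWeight_add]
  linarith [mWeight_nonneg H]

lemma mNet_add [MetricSpace X] {N : ℕ → Set X} {sc ε : ℝ} {F G : Multiset (Sym2 X)}
    (hF : MNetRespecting N sc ε F) (hG : MNetRespecting N sc ε G) :
    MNetRespecting N sc ε (F + G) := by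
  intro x y h
  rcases Multiset.mem_add.1 h with h | h
  · exact hF x y h
  · exact hG x y h

lemma mNet_mono [MetricSpace X] {N : ℕ → Set X} {sc ε : ℝ} {F G : Multiset (Sym2 X)}
    (hG : MNetRespecting N sc ε G) (h : F ≤ G) :
    MNetRespecting N sc ε F := fun x y hxy => hG x y (Multiset.mem_of_le h hxy)

/-- Parity boundary of an edge. -/
noncomputable def bd : Sym2 X → (X →₀ ZMod 2) :=
  Sym2.lift ⟨fun x y => Finsupp.single x 1 + Finsupp.single y 1, fun _ _ => add_comm _ _⟩

noncomputable def par (F : Multiset (Sym2 X)) : X →₀ ZMod 2 := (F.map bd).sum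

lemma par_add (F G : Multiset (Sym2 X)) : par (F + G) = par F + par G := by simp [par]

lemma par_apply (F : Multiset (Sym2 X)) (v : X) : par F v = (mDegree F v : ZMod 2) := by
  induction F using Multiset.induction_on with
  | empty => simp [par, mDegree]
  | cons e F ih =>
    have h1 : par (e ::ₘ F) = bd e + par F := by simp [par]
    rw [h1, Finsupp.add_apply, ih]
    induction e with | _ x y =>
    have h2 : (1 : ZMod 2) + 1 = 0 := by decide
    have h3 : bd s(x, y) = Finsupp.single x 1 + Finsupp.single y 1 := rfl
    rw [h3, Finsupp.add_apply]
    simp only [mDegree, Multiset.filter_cons, Finsupp.single_apply]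
    by_cases hx : v = x <;> by_cases hy : v = y
    · subst hx; subst hy; simp; ring
    · subst hx; simp [Ne.symm hy]; ring
    · subst hy; simp [Ne.symm hx]; ring
    · simp [hx, hy, Ne.symm hx, Ne.symm hy]

lemma par_notMem (F : Multiset (Sym2 X)) (v : X) (h : v ∉ mVerts F) : par F v = 0 := by
  rw [par_apply]
  have h1 : F.filter (fun e => v ∈ e) = 0 := by
    rw [Multiset.filter_eq_nil]
    exact fun e he hv => h ⟨e, he, hv⟩
  have h2 : F.filter (fun e => e = s(v, v)) = 0 := by
    rw [Multiset.filter_eq_nil]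
    rintro e he rfl
    exact h ⟨_, he, by simp⟩
  simp [mDegree, h1, h2]

lemma mEulerian_iff (F : Multiset (Sym2 X)) : MEulerian F ↔ par F = 0 := by
  constructor
  · intro h
    ext v
    by_cases hv : v ∈ mVerts F
    · rw [par_apply]
      simpa using (ZMod.natCast_eq_zero_iff_even).2 (h v hv)
    · simpa using par_notMem F v hv
  · intro h v _
    rw [← ZMod.natCast_eq_zero_iff_even, ← par_apply, h]
    rfl

noncomputable def tot : (X →₀ ZMod 2) →+ ZMod 2 :=
  Finsupp.liftAddHom (fun _ => AddMonoidHom.id _)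

lemma tot_single (x : X) (a : ZMod 2) : tot (Finsupp.single x a) = a := by simp [tot]

lemma tot_par (F : Multiset (Sym2 X)) : tot (par F) = 0 := by
  induction F using Multiset.induction_on with
  | empty => simp [par]
  | cons e F ih =>
    have h1 : par (e ::ₘ F) = bd e + par F := by simp [par]
    rw [h1, map_add, ih]
    induction e with | _ x y =>
    have h3 : bd s(x, y) = Finsupp.single x 1 + Finsupp.single y 1 := rfl
    rw [h3, map_add, tot_single, tot_single]
    decide

lemma zmod2_add_self (f : X →₀ ZMod 2) : f + f = 0 := by
  ext v
  exact CharTwo.add_self_eq_zero (f v)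

lemma tjoin (Q : Multiset (Sym2 X)) (hQ : MConnected Q) (f : X →₀ ZMod 2)
    (hf : ∀ v, f v ≠ 0 → v ∈ mVerts Q) (htot : tot f = 0) :
    ∃ J : Multiset (Sym2 X), J ≤ Q ∧ par J = f := by
  have key : f ∈ Submodule.span (ZMod 2) (bd '' (Q.toFinset : Set (Sym2 X))) := by
    set V := Submodule.span (ZMod 2) (bd '' (Q.toFinset : Set (Sym2 X))) with hV
    have hr : ∀ x y, (mGraph Q).Reachable x y →
        (Finsupp.single x 1 + Finsupp.single y 1 : X →₀ ZMod 2) ∈ V := by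
      rintro x y ⟨p⟩
      induction p with
      | nil => rw [zmod2_add_self]; exact V.zero_mem
      | @cons a b c hab p ih =>
        have h1 : (Finsupp.single a 1 + Finsupp.single b 1 : X →₀ ZMod 2) ∈ V := by
          apply Submodule.subset_span
          refine ⟨s(a, b), ?_, rfl⟩
          have := (SimpleGraph.fromEdgeSet_adj _).1 hab
          simpa using this.1
        have h2 := V.add_mem h1 ih
        have h3 : (Finsupp.single a 1 + Finsupp.single b 1 +
          (Finsupp.single b 1 + Finsupp.single c 1) : X →₀ ZMod 2) =
          Finsupp.single a 1 + (Finsupp.single b 1 + Finsupp.single b 1) + Finsupp.single c 1 := by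
          abel
        rw [h3, zmod2_add_self, add_zero] at h2
        exact h2
    by_cases h0 : f = 0
    · rw [h0]; exact V.zero_mem
    obtain ⟨q, hq⟩ : ∃ q, f q ≠ 0 := by
      by_contra! h
      exact h0 (by ext v; simp [h v])
    have hfs : f = ∑ v ∈ f.support, (Finsupp.single v (f v) + Finsupp.single q (f v)) := by
      rw [Finset.sum_add_distrib]
      have h1 : ∑ v ∈ f.support, Finsupp.single v (f v) = f := f.sum_single
      have h2 : ∑ v ∈ f.support, Finsupp.single q (f v) = 0 := by
        have : tot f = ∑ v ∈ f.support, f v := by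
          conv_lhs => rw [← h1]
          rw [map_sum]
          simp [tot_single]
        rw [← Finsupp.single_finsetSum, ← this, htot, Finsupp.single_zero]
      rw [h1, h2, add_zero]
    rw [hfs]
    apply Submodule.sum_mem
    intro v hv
    have h1 : f v = 1 := by
      have := Finsupp.mem_support_iff.1 hv
      generalize f v = a at *
      revert a; decide
    rw [h1]
    exact hr v q (hQ v (hf v (by rw [h1]; decide)) q (hf q hq))
  obtain ⟨c', hc'⟩ := (Submodule.mem_span_image_finset_iff_exists_fun (ZMod 2)).1 key
  obtain ⟨c, hc⟩ : ∃ c : Sym2 X → ZMod 2, ∑ e ∈ Q.toFinset, c e • bd e = f := by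
    refine ⟨fun e => if h : e ∈ Q.toFinset then c' ⟨e, h⟩ else 0, ?_⟩
    rw [← hc', ← Finset.sum_coe_sort]
    apply Finset.sum_congr rfl
    rintro ⟨e, he⟩ _
    simp only [he, dite_true]
  refine ⟨(Q.toFinset.filter (fun e => c e = 1)).val, ?_, ?_⟩
  · refine le_trans ?_ (Multiset.dedup_le Q)
    exact Multiset.filter_le _ _
  · rw [← hc]
    have : par (Q.toFinset.filter (fun e => c e = 1)).val =
      ∑ e ∈ Q.toFinset.filter (fun e => c e = 1), bd e := rfl
    rw [this, Finset.sum_filter]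
    apply Finset.sum_congr rfl
    intro e _
    have h2 : c e = 0 ∨ c e = 1 := by
      generalize c e = a
      revert a; decide
    rcases h2 with h | h <;> simp [h]

lemma exchange [MetricSpace X] {N : ℕ → Set X} {sc ε : ℝ} {T : Finset X} {π : X → ℝ}
    (hπ : ∀ v, 0 ≤ π v) {eulerCase : Bool} {F : Multiset (Sym2 X)}
    (hFc : MConnected F) (hFe : eulerCase = true → MEulerian F) (hFn : MNetRespecting N sc ε F)
    (hopt : ∀ F' : Multiset (Sym2 X), MConnected F' → (eulerCase = true → MEulerian F') →
        MNetRespecting N sc ε F' → pcCost T π F ≤ pcCost T π F')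
    {G : Multiset (Sym2 X)} (hGc : MConnected G) (hGe : eulerCase = true → MEulerian G)
    (hGn : MNetRespecting N sc ε G)
    {Q : Multiset (Sym2 X)} (hQc : MConnected Q) (hQn : MNetRespecting N sc ε Q)
    (hGQ : ∀ v ∈ mVerts G, ∃ q ∈ mVerts G, q ∈ mVerts Q)
    (R E : Multiset (Sym2 X)) (hRE : R + E = F)
    (hRQ : ∀ v ∈ mVerts R, v ∈ mVerts E → v ∈ mVerts Q)
    (B : Set X) (hB : ∀ v ∈ mVerts R, v ∈ mVerts Q ∨ v ∈ B) :
    mWeight R ≤ pcCost (T.filter (fun v => v ∈ B)) π G + 3 * mWeight Q := by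
  have hGnn : 0 ≤ pcCost (T.filter (fun v => v ∈ B)) π G :=
    add_nonneg (mWeight_nonneg _) (Finset.sum_nonneg fun v _ => hπ v)
  by_cases hR0 : mVerts R = ∅
  · have : R = 0 := by
      apply Multiset.eq_zero_of_forall_notMem
      intro e he
      induction e with | _ x y =>
      have : x ∈ mVerts R := ⟨_, he, by simp⟩
      rw [hR0] at this
      exact this
    subst this
    have : mWeight (0 : Multiset (Sym2 X)) = 0 := by simp [mWeight]
    linarith [mWeight_nonneg Q]
  obtain ⟨r, hr⟩ := Set.nonempty_iff_ne_empty.2 hR0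
  have hFR : mVerts F = mVerts R ∪ mVerts E := by rw [← hRE, mVerts_add]
  have claim : ∀ a r, r ∈ mVerts R → (mGraph F).Reachable a r → a ∈ mVerts E →
      ∃ q ∈ mVerts Q, (mGraph E).Reachable a q := by
    rintro a r hr ⟨p⟩
    induction p with
    | nil => exact fun ha => ⟨_, hRQ _ hr ha, SimpleGraph.Reachable.refl _⟩
    | @cons a b c hab p ih =>
      intro ha
      by_cases haR : a ∈ mVerts R
      · exact ⟨_, hRQ _ haR ha, SimpleGraph.Reachable.refl _⟩
      have h1 := (SimpleGraph.fromEdgeSet_adj _).1 hab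
      have h2 : s(a, b) ∈ R + E := by rw [hRE]; exact h1.1
      have h3 : s(a, b) ∈ E := by
        rcases Multiset.mem_add.1 h2 with h | h
        · exact absurd ⟨_, h, by simp⟩ haR
        · exact h
      obtain ⟨q, hq, hbq⟩ := ih hr ⟨_, h3, by simp⟩
      refine ⟨q, hq, SimpleGraph.Reachable.trans (SimpleGraph.Adj.reachable ?_) hbq⟩
      exact (SimpleGraph.fromEdgeSet_adj _).2 ⟨h3, h1.2⟩
  obtain ⟨J, hJQ, hJ⟩ : ∃ J : Multiset (Sym2 X), J ≤ Q ∧ (eulerCase = true → par J = par E) := by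
    by_cases he : eulerCase = true
    · obtain ⟨J, h1, h2⟩ := tjoin Q hQc (par E) (by
        intro v hv
        have hvE : v ∈ mVerts E := by
          by_contra h; exact hv (par_notMem _ _ h)
        have hF0 := (mEulerian_iff F).1 (hFe he)
        rw [← hRE, par_add] at hF0
        have hvR : v ∈ mVerts R := by
          by_contra h
          have := DFunLike.congr_fun hF0 v
          rw [Finsupp.add_apply, par_notMem _ _ h, zero_add] at this
          exact hv this
        exact hRQ v hvR hvE) (tot_par E)
      exact ⟨J, h1, fun _ => h2⟩
    · exact ⟨0, Multiset.zero_le _, fun h => absurd h he⟩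
  set F' := E + G + (Q + Q) + J with hF'
  have hEle : E ≤ F' := by
    rw [hF', add_assoc, add_assoc]; exact Multiset.le_add_right _ _
  have hGle : G ≤ F' := by
    rw [hF', add_comm E G, add_assoc, add_assoc]; exact Multiset.le_add_right _ _
  have hQle : Q ≤ F' := by
    have : F' = Q + (E + G + Q + J) := by rw [hF']; abel
    rw [this]; exact Multiset.le_add_right _ _
  have hEF : E ≤ F := by rw [← hRE]; exact Multiset.le_add_left _ _
  have hV : mVerts F' = mVerts E ∪ mVerts G ∪ mVerts Q := by
    rw [hF', mVerts_add, mVerts_add, mVerts_add, mVerts_add, Set.union_self, Set.union_assoc,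
      Set.union_eq_self_of_subset_right (mVerts_mono hJQ)]
  have hreach : ∀ v ∈ mVerts F', ∃ q ∈ mVerts Q, (mGraph F').Reachable v q := by
    intro v hv
    rw [hV] at hv
    rcases hv with (hv | hv) | hv
    · obtain ⟨q, hq, h⟩ := claim v r hr (hFc v (by rw [hFR]; exact Or.inr hv) r
        (by rw [hFR]; exact Or.inl hr)) hv
      exact ⟨q, hq, h.mono (mGraph_mono hEle)⟩
    · obtain ⟨q, hq, hq'⟩ := hGQ v hv
      exact ⟨q, hq', (hGc v hv q hq).mono (mGraph_mono hGle)⟩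
    · exact ⟨v, hv, SimpleGraph.Reachable.refl _⟩
  have hc' : MConnected F' := by
    intro x hx y hy
    obtain ⟨q, hq, h⟩ := hreach x hx
    obtain ⟨q', hq', h'⟩ := hreach y hy
    exact h.trans (((hQc q hq q' hq').mono (mGraph_mono hQle)).trans h'.symm)
  have he' : eulerCase = true → MEulerian F' := by
    intro he
    rw [mEulerian_iff, hF', par_add, par_add, par_add, par_add, hJ he,
      (mEulerian_iff G).1 (hGe he), zmod2_add_self, add_zero, add_zero, zmod2_add_self]
  have hn' : MNetRespecting N sc ε F' :=
    mNet_add (mNet_add (mNet_add (mNet_mono hFn hEF) hGn) (mNet_add hQn hQn)) (mNet_mono hQn hJQ)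
  have hcost := hopt F' hc' he' hn'
  have hw1 : mWeight F = mWeight R + mWeight E := by rw [← hRE, mWeight_add]
  have hw2 : mWeight F' = mWeight E + mWeight G + (mWeight Q + mWeight Q) + mWeight J := by
    rw [hF', mWeight_add, mWeight_add, mWeight_add, mWeight_add]
  have hw3 := mWeight_mono hJQ
  have hpen : ∑ v ∈ T.filter (fun v => v ∉ mVerts F'), π v ≤
      ∑ v ∈ T.filter (fun v => v ∉ mVerts F), π v +
      ∑ v ∈ (T.filter (fun v => v ∈ B)).filter (fun v => v ∉ mVerts G), π v := by
    refine le_trans (Finset.sum_le_sum_of_subset_of_nonneg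
      (t := T.filter (fun v => v ∉ mVerts F) ∪
        (T.filter (fun v => v ∈ B)).filter (fun v => v ∉ mVerts G)) ?_ (fun v _ _ => hπ v)) ?_
    · intro v hv
      simp only [Finset.mem_filter, Finset.mem_union, hV, Set.mem_union, not_or] at hv ⊢
      obtain ⟨hT, ⟨hE, hG⟩, hQ⟩ := hv
      by_cases hvF : v ∈ mVerts F
      · right
        rw [hFR] at hvF
        rcases hvF with h | h
        · rcases hB v h with h | h
          · exact absurd h hQ
          · exact ⟨⟨hT, h⟩, hG⟩
        · exact absurd h hE
      · exact Or.inl ⟨hT, hvF⟩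
    · rw [← Finset.sum_union_inter]
      have := Finset.sum_nonneg (s := T.filter (fun v => v ∉ mVerts F) ∩
        (T.filter (fun v => v ∈ B)).filter (fun v => v ∉ mVerts G)) (fun v _ => hπ v)
      linarith
  unfold pcCost at hcost ⊢
  linarith

end Basics

section Conn
variable {X : Type*}

lemma mConnected_add {Q Q' : Multiset (Sym2 X)} (h : MConnected Q) (h' : MConnected Q') (p : X)
    (hp : p ∈ mVerts Q) (hp' : p ∈ mVerts Q') : MConnected (Q + Q') := by
  have key : ∀ v ∈ mVerts (Q + Q'), (mGraph (Q + Q')).Reachable v p := by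
    intro v hv
    rw [mVerts_add] at hv
    rcases hv with hv | hv
    · exact (h v hv p hp).mono (mGraph_mono (Multiset.le_add_right _ _))
    · exact (h' v hv p hp').mono (mGraph_mono (Multiset.le_add_left _ _))
  intro x hx y hy
  exact (key x hx).trans (key y hy).symm

lemma mConnected_single (x y : X) : MConnected ({s(x, y)} : Multiset (Sym2 X)) := by
  have key : ∀ v ∈ mVerts ({s(x, y)} : Multiset (Sym2 X)),
      (mGraph ({s(x, y)} : Multiset (Sym2 X))).Reachable v x := by
    rintro v ⟨e, he, hv⟩
    rw [Multiset.mem_singleton] at he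
    subst he
    rcases Sym2.mem_iff.1 hv with rfl | rfl
    · exact SimpleGraph.Reachable.refl _
    · by_cases h : x = v
      · rw [h]
      · apply SimpleGraph.Adj.reachable
        exact ((SimpleGraph.fromEdgeSet_adj _).2 ⟨by simp, h⟩ :
          (mGraph ({s(x, v)} : Multiset (Sym2 X))).Adj x v).symm
  intro a ha b hb
  exact (key a ha).trans (key b hb).symm

lemma mVerts_single (x y : X) : x ∈ mVerts ({s(x, y)} : Multiset (Sym2 X)) ∧
    y ∈ mVerts ({s(x, y)} : Multiset (Sym2 X)) :=
  ⟨⟨s(x, y), by simp, by simp⟩, ⟨s(x, y), by simp, by simp⟩⟩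

variable [MetricSpace X]

lemma mWeight_single (x y : X) : mWeight ({s(x, y)} : Multiset (Sym2 X)) = dist x y := by
  simp [mWeight, edgeLen]

/-- `Q` is a net-respecting connected multigraph joining `x` and `y` of weight at most `c`. -/
structure Link (N : ℕ → Set X) (sc ε : ℝ) (x y : X) (c : ℝ) (Q : Multiset (Sym2 X)) : Prop where
  conn : MConnected Q
  net : MNetRespecting N sc ε Q
  hx : x ∈ mVerts Q
  hy : y ∈ mVerts Q
  le : mWeight Q ≤ c

lemma Link.trans {N : ℕ → Set X} {sc ε : ℝ} {x y z : X} {c c' : ℝ} {Q Q' : Multiset (Sym2 X)}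
    (h : Link N sc ε x y c Q) (h' : Link N sc ε y z c' Q') : Link N sc ε x z (c + c') (Q + Q') :=
  ⟨mConnected_add h.conn h'.conn y h.hy h'.hx, mNet_add h.net h'.net,
    by rw [mVerts_add]; exact Or.inl h.hx, by rw [mVerts_add]; exact Or.inr h'.hy,
    by rw [mWeight_add]; exact add_le_add h.le h'.le⟩

lemma Link.symm {N : ℕ → Set X} {sc ε : ℝ} {x y : X} {c : ℝ} {Q : Multiset (Sym2 X)}
    (h : Link N sc ε x y c Q) : Link N sc ε y x c Q := ⟨h.conn, h.net, h.hy, h.hx, h.le⟩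

lemma nets_anti {N : ℕ → Set X} (hN : ∀ i : ℕ, N (i + 1) ⊆ N i) {i j : ℕ} (h : i ≤ j) :
    N j ⊆ N i := antitone_nat_of_succ_le hN h

lemma link_edge {N : ℕ → Set X} {sc ε : ℝ} (hsc : 4 ≤ sc) (hN : ∀ i : ℕ, N (i + 1) ⊆ N i)
    (j : ℕ) (x y : X) (hx : x ∈ N j) (hy : y ∈ N j) (h : ε * dist x y < sc ^ (j + 1)) :
    Link N sc ε x y (dist x y) {s(x, y)} := by
  refine ⟨mConnected_single x y, ?_, (mVerts_single x y).1, (mVerts_single x y).2,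
    (mWeight_single x y).le⟩
  intro a b hab i h1 h2
  rw [Multiset.mem_singleton] at hab
  have hd : dist a b = dist x y := congrArg edgeLen hab
  rw [hd] at h1
  have hij : i < j + 1 := (pow_lt_pow_iff_right₀ (by linarith : (1 : ℝ) < sc)).1 (h1.trans_lt h)
  have hs := nets_anti hN (Nat.lt_succ_iff.1 hij)
  rcases Sym2.eq_iff.1 hab with ⟨rfl, rfl⟩ | ⟨rfl, rfl⟩
  · exact ⟨hs hx, hs hy⟩
  · exact ⟨hs hy, hs hx⟩

lemma climb {N : ℕ → Set X} {sc ε : ℝ} (hsc : 4 ≤ sc) (hε : 0 < ε) (hε1 : ε < 1)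
    (hN0 : N 0 = Set.univ) (hN : ∀ i : ℕ, N (i + 1) ⊆ N i)
    (hcov : ∀ i : ℕ, ∀ x ∈ N i, ∃ y ∈ N (i + 1), dist x y ≤ sc ^ (i + 1)) (j : ℕ) (x : X) :
    ∃ y ∈ N j, dist x y ≤ 4 / 3 * sc ^ j ∧ ∃ Q, Link N sc ε x y (4 / 3 * sc ^ j) Q := by
  induction j with
  | zero =>
    refine ⟨x, by rw [hN0]; trivial, by simp; norm_num, {s(x, x)}, ?_⟩
    have := link_edge (ε := ε) hsc hN 0 x x (by rw [hN0]; trivial) (by rw [hN0]; trivial)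
      (by simp; linarith)
    exact ⟨this.conn, this.net, this.hx, this.hy, this.le.trans (by simp; norm_num)⟩
  | succ j ih =>
    obtain ⟨y, hy, hd, Q, hQ⟩ := ih
    obtain ⟨z, hz, hyz⟩ := hcov j y hy
    have hp : 0 < sc ^ j := by positivity
    have hps : sc ^ (j + 1) = sc * sc ^ j := by ring
    have hb : 4 / 3 * sc ^ j + sc ^ (j + 1) ≤ 4 / 3 * sc ^ (j + 1) := by rw [hps]; nlinarith
    have hpos : 0 < sc ^ (j + 1) := by positivity
    by_cases h0 : y = z
    · subst h0
      exact ⟨y, hz, by linarith, Q, hQ.conn, hQ.net, hQ.hx, hQ.hy, by linarith [hQ.le]⟩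
    have hlt : ε * dist y z < sc ^ (j + 1) := by
      have : 0 < dist y z := dist_pos.2 h0
      nlinarith
    have h2 := hQ.trans (link_edge hsc hN j y z hy (hN j hz) hlt)
    refine ⟨z, hz, ?_, _, h2.conn, h2.net, h2.hx, h2.hy, ?_⟩
    · linarith [dist_triangle x y z]
    · linarith [h2.le]

lemma link {N : ℕ → Set X} {sc ε : ℝ} (hsc : 4 ≤ sc) (hε : 0 < ε) (hε1 : ε < 1)
    (hN0 : N 0 = Set.univ) (hN : ∀ i : ℕ, N (i + 1) ⊆ N i)
    (hcov : ∀ i : ℕ, ∀ x ∈ N i, ∃ y ∈ N (i + 1), dist x y ≤ sc ^ (i + 1)) (x y : X) :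
    ∃ Q, Link N sc ε x y (7 * sc * dist x y) Q := by
  have hd0 : 0 ≤ dist x y := dist_nonneg
  have hex : ∃ j : ℕ, dist x y ≤ sc ^ j := by
    obtain ⟨j, hj⟩ := pow_unbounded_of_one_lt (dist x y) (by linarith : (1 : ℝ) < sc)
    exact ⟨j, hj.le⟩
  have hj := Nat.find_spec hex
  have hmin := fun m => Nat.find_min hex (m := m)
  set j := Nat.find hex
  rcases Nat.eq_zero_or_pos j with h0 | h0
  · rw [h0, pow_zero] at hj
    have := link_edge (ε := ε) hsc hN 0 x y (by rw [hN0]; trivial) (by rw [hN0]; trivial)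
      (by simp; nlinarith)
    exact ⟨_, this.conn, this.net, this.hx, this.hy, this.le.trans (by nlinarith)⟩
  obtain ⟨m, hm⟩ : ∃ m, j = m + 1 := ⟨j - 1, by omega⟩
  have h1 := not_le.1 (hmin m (by omega))
  have hps : sc ^ j = sc * sc ^ m := by rw [hm]; ring
  have hp : 0 < sc ^ j := by positivity
  have hps' : sc ^ (j + 1) = sc * sc ^ j := by ring
  obtain ⟨x', hx', hdx, Q1, hQ1⟩ := climb hsc hε hε1 hN0 hN hcov j x
  obtain ⟨y', hy', hdy, Q2, hQ2⟩ := climb hsc hε hε1 hN0 hN hcov j y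
  have hd' : dist x' y' ≤ dist x y + 8 / 3 * sc ^ j := by
    have := dist_triangle4 x' x y y'
    rw [dist_comm x' x] at this
    linarith
  have hlt : ε * dist x' y' < sc ^ (j + 1) := by
    have h5 : ε * dist x' y' ≤ 1 * dist x' y' := by gcongr
    rw [hps']
    nlinarith
  have h3 := (hQ1.trans (link_edge hsc hN j x' y' hx' hy' hlt)).trans hQ2.symm
  refine ⟨_, h3.conn, h3.net, h3.hx, h3.hy, h3.le.trans ?_⟩
  have : sc ^ j ≤ sc * dist x y := by rw [hps]; gcongr
  nlinarith

lemma attach {N : ℕ → Set X} {sc ε : ℝ} (hsc : 4 ≤ sc) (hε : 0 < ε) (hε1 : ε < 1)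
    (hN0 : N 0 = Set.univ) (hN : ∀ i : ℕ, N (i + 1) ⊆ N i)
    (hcov : ∀ i : ℕ, ∀ x ∈ N i, ∃ y ∈ N (i + 1), dist x y ≤ sc ^ (i + 1))
    (Q₀ : Multiset (Sym2 X)) (hQc : MConnected Q₀) (hQn : MNetRespecting N sc ε Q₀)
    (ρ : ℝ) (Y : Finset X)
    (hY : ∀ y ∈ Y, ∃ p ∈ mVerts Q₀, dist y p ≤ ρ) :
    ∃ Q, MConnected Q ∧ MNetRespecting N sc ε Q ∧ mVerts Q₀ ⊆ mVerts Q ∧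
      (∀ y ∈ Y, y ∈ mVerts Q) ∧ mWeight Q ≤ mWeight Q₀ + Y.card * (7 * sc * ρ) := by
  induction Y using Finset.induction_on with
  | empty => exact ⟨Q₀, hQc, hQn, subset_rfl, by simp, by simp⟩
  | insert a Y ha ih =>
    obtain ⟨Q, h1, h2, h3, h4, h5⟩ := ih (fun y hy => hY y (Finset.mem_insert_of_mem hy))
    obtain ⟨p, hp, hap⟩ := hY a (Finset.mem_insert_self _ _)
    obtain ⟨Q', hQ'⟩ := link hsc hε hε1 hN0 hN hcov a p
    refine ⟨Q + Q', mConnected_add h1 hQ'.conn p (h3 hp) hQ'.hy, mNet_add h2 hQ'.net, ?_, ?_, ?_⟩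
    · rw [mVerts_add]; exact h3.trans Set.subset_union_left
    · intro y hy
      rw [mVerts_add]
      rcases Finset.mem_insert.1 hy with rfl | hy
      · exact Or.inr hQ'.hx
      · exact Or.inl (h4 y hy)
    · rw [mWeight_add, Finset.card_insert_of_notMem ha]
      push_cast
      have : 7 * sc * dist a p ≤ 7 * sc * ρ := by gcongr
      linarith [hQ'.le]

lemma star {N : ℕ → Set X} {sc ε : ℝ} (hsc : 4 ≤ sc) (hε : 0 < ε) (hε1 : ε < 1)
    (hN0 : N 0 = Set.univ) (hN : ∀ i : ℕ, N (i + 1) ⊆ N i)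
    (hcov : ∀ i : ℕ, ∀ x ∈ N i, ∃ y ∈ N (i + 1), dist x y ≤ sc ^ (i + 1))
    (u : X) (R₀ ρ : ℝ) (hρ : ρ ≤ R₀) (hR₀ : 0 ≤ R₀) (M Y : Finset X)
    (hM : Metric.closedBall u R₀ ⊆ ⋃ c ∈ M, Metric.closedBall c ρ)
    (hY : ∀ y ∈ Y, dist y u ≤ R₀) :
    ∃ Q, MConnected Q ∧ MNetRespecting N sc ε Q ∧
      (∀ y ∈ Y, y ∈ mVerts Q) ∧
      mWeight Q ≤ 7 * sc * (Y.card * ρ + M.card * (2 * R₀)) := by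
  have hl := link_edge (ε := ε) hsc hN 0 u u (by rw [hN0]; trivial) (by rw [hN0]; trivial)
    (by simp; linarith)
  obtain ⟨Q₁, a1, a2, a3, a4, a5⟩ := attach hsc hε hε1 hN0 hN hcov _ hl.conn hl.net (2 * R₀)
    (M.filter (fun c => dist c u ≤ 2 * R₀)) (fun y hy => ⟨u, hl.hx, (Finset.mem_filter.1 hy).2⟩)
  obtain ⟨Q, b1, b2, b3, b4, b5⟩ := attach hsc hε hε1 hN0 hN hcov Q₁ a1 a2 ρ Y (by
    intro y hy
    have h1 := hM (Metric.mem_closedBall.2 (hY y hy))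
    simp only [Set.mem_iUnion, Metric.mem_closedBall] at h1
    obtain ⟨c, hc, hyc⟩ := h1
    refine ⟨c, a4 c (Finset.mem_filter.2 ⟨hc, ?_⟩), hyc⟩
    have := dist_triangle c y u
    rw [dist_comm c y] at this
    linarith [hY y hy])
  refine ⟨Q, b1, b2, b4, ?_⟩
  have hle := hl.le
  rw [dist_self] at hle
  have hcard : ((M.filter (fun c => dist c u ≤ 2 * R₀)).card : ℝ) ≤ M.card := by
    exact_mod_cast Finset.card_filter_le _ _
  have : ((M.filter (fun c => dist c u ≤ 2 * R₀)).card : ℝ) * (7 * sc * (2 * R₀)) ≤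
    M.card * (7 * sc * (2 * R₀)) := by gcongr
  linarith

lemma cover (k : ℕ) (hdbl : ∀ x : X, ∀ ρ : ℝ, 0 < ρ → ∃ Cs : Finset X, Cs.card ≤ 2 ^ k ∧
      Metric.closedBall x (2 * ρ) ⊆ ⋃ c ∈ Cs, Metric.closedBall c ρ) (m : ℕ) (x : X) (ρ : ℝ)
    (hρ : 0 < ρ) : ∃ Cs : Finset X, Cs.card ≤ (2 ^ k) ^ m ∧
      Metric.closedBall x (2 ^ m * ρ) ⊆ ⋃ c ∈ Cs, Metric.closedBall c ρ := by
  induction m generalizing ρ with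
  | zero => exact ⟨{x}, by simp, by simp⟩
  | succ m ih =>
    obtain ⟨Cs, h1, h2⟩ := ih (2 * ρ) (by linarith)
    choose f hf1 hf2 using fun c => hdbl c ρ hρ
    refine ⟨Cs.biUnion f, ?_, ?_⟩
    · calc _ ≤ Cs.card * 2 ^ k := Finset.card_biUnion_le_card_mul _ _ _ (fun c _ => hf1 c)
        _ ≤ (2 ^ k) ^ m * 2 ^ k := by gcongr
        _ = _ := by ring
    · intro y hy
      have : y ∈ Metric.closedBall x (2 ^ m * (2 * ρ)) := by
        rw [pow_succ, mul_assoc] at hy; exact hy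
      have h3 := h2 this
      simp only [Set.mem_iUnion] at h3
      obtain ⟨c, hc, hyc⟩ := h3
      have h4 := hf2 c hyc
      simp only [Set.mem_iUnion] at h4 ⊢
      obtain ⟨c', hc', hyc'⟩ := h4
      exact ⟨c', Finset.mem_biUnion.2 ⟨c, hc, hc'⟩, hyc'⟩

lemma cover_real (k : ℕ) (hdbl : ∀ x : X, ∀ ρ : ℝ, 0 < ρ → ∃ Cs : Finset X, Cs.card ≤ 2 ^ k ∧
      Metric.closedBall x (2 * ρ) ⊆ ⋃ c ∈ Cs, Metric.closedBall c ρ) (x : X) (R ρ : ℝ)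
    (hρ : 0 < ρ) (hR : ρ ≤ R) : ∃ Cs : Finset X, (Cs.card : ℝ) ≤ (2 * R / ρ) ^ k ∧
      Metric.closedBall x R ⊆ ⋃ c ∈ Cs, Metric.closedBall c ρ := by
  obtain ⟨n, h1, h2⟩ := exists_nat_pow_near (x := R / ρ) (y := (2 : ℝ))
    ((one_le_div hρ).2 hR) (by norm_num)
  obtain ⟨Cs, h3, h4⟩ := cover k hdbl (n + 1) x ρ hρ
  refine ⟨Cs, ?_, ?_⟩
  · calc (Cs.card : ℝ) ≤ (((2 ^ k) ^ (n + 1) : ℕ) : ℝ) := by exact_mod_cast h3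
      _ = (2 * 2 ^ n) ^ k := by push_cast; rw [← pow_mul, ← pow_succ', ← pow_mul, mul_comm]
      _ ≤ (2 * (R / ρ)) ^ k := by gcongr
      _ = _ := by rw [mul_div_assoc]
  · refine subset_trans (Metric.closedBall_subset_closedBall ?_) h4
    exact ((div_lt_iff₀ hρ).1 h2).le

/-- Edge `e` crosses the sphere of radius `r` around `u`. -/
def Cross (u : X) (r : ℝ) (e : Sym2 X) : Prop := (∃ x ∈ e, dist x u ≤ r) ∧ ∃ y ∈ e, r < dist y u

lemma cross_iff (u x y : X) (r : ℝ) : Cross u r s(x, y) ↔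
    r ∈ Set.Ico (min (dist x u) (dist y u)) (max (dist x u) (dist y u)) := by
  simp only [Cross, Sym2.mem_iff, exists_eq_or_imp, exists_eq_left, Set.mem_Ico, min_le_iff,
    lt_max_iff]

lemma averaging (u : X) (S : Multiset (Sym2 X)) (a b : ℝ) (hab : a < b) :
    ∃ r ∈ Set.Icc a b, ((S.filter (Cross u r)).card : ℝ) * (b - a) ≤ mWeight S := by
  have key : MeasureTheory.IntegrableOn (fun r => ((S.filter (Cross u r)).card : ℝ)) (Set.Icc a b)
      ∧ ∫ r in Set.Icc a b, ((S.filter (Cross u r)).card : ℝ) ≤ mWeight S := by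
    induction S using Multiset.induction_on with
    | empty => simp [mWeight]
    | cons e S ih =>
      obtain ⟨h1, h2⟩ := ih
      induction e with | _ x y =>
      set I := Set.Ico (min (dist x u) (dist y u)) (max (dist x u) (dist y u)) with hI
      have hf : (fun r => (((s(x, y) ::ₘ S).filter (Cross u r)).card : ℝ)) =
          fun r => I.indicator (fun _ => (1 : ℝ)) r + ((S.filter (Cross u r)).card : ℝ) := by
        funext r
        rw [Multiset.filter_cons]
        by_cases h : Cross u r s(x, y)
        · rw [if_pos h, Set.indicator_of_mem ((cross_iff u x y r).1 h)]
          simp [add_comm]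
        · rw [if_neg h, Set.indicator_of_notMem (fun h' => h ((cross_iff u x y r).2 h'))]
          simp
      have hi : MeasureTheory.IntegrableOn (I.indicator (fun _ => (1 : ℝ))) (Set.Icc a b) := by
        apply MeasureTheory.Integrable.indicator _ measurableSet_Ico
        simp
      rw [hf]
      refine ⟨hi.add h1, ?_⟩
      rw [MeasureTheory.integral_add hi h1]
      have hw : mWeight (s(x, y) ::ₘ S) = dist x y + mWeight S := by simp [mWeight, edgeLen]
      rw [hw]
      refine add_le_add ?_ h2
      rw [MeasureTheory.integral_indicator measurableSet_Ico,
        MeasureTheory.Measure.restrict_restrict measurableSet_Ico]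
      simp only [MeasureTheory.integral_const, smul_eq_mul, mul_one,
        MeasureTheory.measureReal_restrict_apply_univ]
      calc MeasureTheory.volume.real (I ∩ Set.Icc a b) ≤ MeasureTheory.volume.real I := by
            exact MeasureTheory.measureReal_mono Set.inter_subset_left (by
              rw [hI, Real.volume_Ico]; exact ENNReal.ofReal_ne_top)
        _ = max (dist x u) (dist y u) - min (dist x u) (dist y u) := by
            rw [hI, Real.volume_real_Ico_of_le min_le_max]
        _ = |dist x u - dist y u| := by rw [max_sub_min_eq_abs, abs_sub_comm]
        _ ≤ dist x y := abs_dist_sub_le x y u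
  have hvol : MeasureTheory.volume (Set.Icc a b) ≠ 0 := by
    simp [hab]
  obtain ⟨r, hr, h⟩ := MeasureTheory.exists_le_setAverage hvol (by simp) key.1
  refine ⟨r, hr, ?_⟩
  rw [MeasureTheory.setAverage_eq, Real.volume_real_Icc_of_le hab.le, smul_eq_mul] at h
  have hpos : 0 < b - a := by linarith
  calc _ ≤ (b - a)⁻¹ * (∫ r in Set.Icc a b, ((S.filter (Cross u r)).card : ℝ)) * (b - a) := by
        gcongr
    _ = ∫ r in Set.Icc a b, ((S.filter (Cross u r)).card : ℝ) := by field_simp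
    _ ≤ _ := key.2

end Conn

section Step
variable {X : Type*}

lemma exists_verts (L : Multiset (Sym2 X)) : ∃ Y : Finset X, Y.card ≤ 2 * L.card ∧
    ∀ v, v ∈ Y ↔ v ∈ mVerts L := by
  induction L using Multiset.induction_on with
  | empty => exact ⟨∅, by simp, by simp [mVerts]⟩
  | cons e L ih =>
    obtain ⟨Y, h1, h2⟩ := ih
    induction e with | _ x y =>
    refine ⟨insert x (insert y Y), ?_, ?_⟩
    · have a := Finset.card_insert_le x (insert y Y)
      have b := Finset.card_insert_le y Y
      rw [Multiset.card_cons]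
      omega
    · intro v
      simp only [Finset.mem_insert, h2]
      simp only [mVerts, Set.mem_ofPred_eq, Multiset.mem_cons, exists_eq_or_imp, Sym2.mem_iff]
      tauto

variable [MetricSpace X]

/-- All endpoints in the closed ball. -/
def InB (u : X) (r : ℝ) (e : Sym2 X) : Prop := ∀ x ∈ e, x ∈ Metric.closedBall u r

lemma restrictBall_eq (F : Multiset (Sym2 X)) (u : X) (r : ℝ) :
    restrictBall F u r = F.filter (InB u r) := by
  unfold restrictBall InB
  congr

lemma restrictBall_mono (F : Multiset (Sym2 X)) (u : X) {r r' : ℝ} (h : r ≤ r') :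
    restrictBall F u r ≤ restrictBall F u r' := by
  rw [restrictBall_eq, restrictBall_eq]
  apply Multiset.monotone_filter_right
  intro e he x hx
  exact Metric.closedBall_subset_closedBall h (he x hx)

lemma shell (F : Multiset (Sym2 X)) (u : X) (r₀ h : ℝ) (hh : 0 < h) :
    ∃ r, r₀ ≤ r ∧ r ≤ r₀ + h ∧
      ((F.filter (fun e => Cross u r e ∧ edgeLen e ≤ h / 2)).card : ℝ) * (h / 2) ≤
        mWeight (restrictBall F u (r₀ + h)) - mWeight (restrictBall F u r₀) := by
  set S₀ := F.filter (fun e => edgeLen e ≤ h / 2 ∧ InB u (r₀ + h) e ∧ ¬ InB u r₀ e) with hS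
  obtain ⟨r, ⟨hr1, hr2⟩, hr⟩ := averaging u S₀ r₀ (r₀ + h / 2) (by linarith)
  refine ⟨r, hr1, by linarith, ?_⟩
  have h1 : F.filter (fun e => Cross u r e ∧ edgeLen e ≤ h / 2) ≤ S₀.filter (Cross u r) := by
    rw [hS, Multiset.filter_filter]
    apply Multiset.monotone_filter_right
    rintro e ⟨hc, hl⟩
    refine ⟨hc, hl, ?_, ?_⟩
    · obtain ⟨⟨x, hx, hxr⟩, -⟩ := hc
      intro y hy
      have hxy : dist y x ≤ h / 2 := by
        induction e with | _ a b =>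
        have hab : dist a b ≤ h / 2 := hl
        rcases Sym2.mem_iff.1 hx with rfl | rfl <;> rcases Sym2.mem_iff.1 hy with rfl | rfl
        · rw [dist_self]; linarith
        · rwa [dist_comm]
        · exact hab
        · rw [dist_self]; linarith
      rw [Metric.mem_closedBall]
      linarith [dist_triangle y x u]
    · obtain ⟨-, ⟨y, hy, hyr⟩⟩ := hc
      intro hin
      have := Metric.mem_closedBall.1 (hin y hy)
      linarith
  have h2 : mWeight S₀ ≤
      mWeight (restrictBall F u (r₀ + h)) - mWeight (restrictBall F u r₀) := by
    have e1 := Multiset.filter_add_not (InB u r₀) (restrictBall F u (r₀ + h))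
    have e2 := congrArg mWeight e1
    rw [mWeight_add] at e2
    have e3 : mWeight (restrictBall F u r₀) ≤
        mWeight ((restrictBall F u (r₀ + h)).filter (InB u r₀)) := by
      apply mWeight_mono
      rw [restrictBall_eq, restrictBall_eq, Multiset.filter_filter]
      apply Multiset.monotone_filter_right
      intro e he
      exact ⟨he, fun x hx => Metric.closedBall_subset_closedBall (by linarith) (he x hx)⟩
    have e4 : mWeight S₀ ≤
        mWeight ((restrictBall F u (r₀ + h)).filter (fun e => ¬ InB u r₀ e)) := by
      apply mWeight_mono
      rw [hS, restrictBall_eq, Multiset.filter_filter]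
      apply Multiset.monotone_filter_right
      rintro e ⟨_, h2, h3⟩
      exact ⟨h3, h2⟩
    linarith
  have h3 : ((F.filter (fun e => Cross u r e ∧ edgeLen e ≤ h / 2)).card : ℝ) ≤
      (S₀.filter (Cross u r)).card := by exact_mod_cast Multiset.card_le_card h1
  calc _ ≤ ((S₀.filter (Cross u r)).card : ℝ) * (h / 2) := by gcongr
    _ = ((S₀.filter (Cross u r)).card : ℝ) * (r₀ + h / 2 - r₀) := by ring
    _ ≤ _ := hr.trans h2

lemma step {N : ℕ → Set X} {sc ε : ℝ} (hsc : 4 ≤ sc) (hε : 0 < ε) (hε1 : ε < 1)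
    (hN0 : N 0 = Set.univ) (hN : ∀ i : ℕ, N (i + 1) ⊆ N i)
    (hsep : ∀ i : ℕ, ∀ a ∈ N (i + 1), ∀ b ∈ N (i + 1), a ≠ b → sc ^ (i + 1) < dist a b)
    (hcov : ∀ i : ℕ, ∀ x ∈ N i, ∃ y ∈ N (i + 1), dist x y ≤ sc ^ (i + 1))
    {T : Finset X} {π : X → ℝ}
    (hπ : ∀ v, 0 ≤ π v) {eulerCase : Bool} {F : Multiset (Sym2 X)}
    (hFc : MConnected F) (hFe : eulerCase = true → MEulerian F) (hFn : MNetRespecting N sc ε F)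
    (hopt : ∀ F' : Multiset (Sym2 X), MConnected F' → (eulerCase = true → MEulerian F') →
        MNetRespecting N sc ε F' → pcCost T π F ≤ pcCost T π F')
    {G : Multiset (Sym2 X)} (hGc : MConnected G) (hGe : eulerCase = true → MEulerian G)
    (hGn : MNetRespecting N sc ε G) (i : ℕ) (hi : 1 ≤ i) (u : X)
    (r₀ h r₁ R₀ ρ : ℝ) (hh : 0 < h) (hr₁ : r₀ + h ≤ r₁) (hR₀ : r₁ + sc ^ i / ε ≤ R₀)
    (hr₁' : 0 ≤ r₁)
    (hρ : ρ = h / (336 * sc)) (hhS : h ≤ sc ^ i)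
    (M : Finset X) (hM : Metric.closedBall u R₀ ⊆ ⋃ c ∈ M, Metric.closedBall c ρ)
    (hG : ∀ v ∈ mVerts G, ∃ g ∈ mVerts G, dist g u ≤ R₀) :
    mWeight (restrictBall F u r₀) ≤
      pcCost (T.filter (fun v => v ∈ Metric.closedBall u r₁)) π G +
      (mWeight (restrictBall F u (r₀ + h)) - mWeight (restrictBall F u r₀)) / 4 +
      84 * sc * M.card * R₀ := by
  have hS : 0 < sc ^ i := by positivity
  have hSε : sc ^ i ≤ sc ^ i / ε := by rw [le_div_iff₀ hε]; nlinarith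
  have hρ0 : 0 < ρ := by rw [hρ]; positivity
  have hρh : ρ * (336 * sc) = h := by rw [hρ]; field_simp
  have hρS : 2 * ρ ≤ sc ^ i := by nlinarith
  have hρR : ρ ≤ R₀ := by linarith
  have hR₀0 : 0 < R₀ := by linarith
  have hM1 : (1 : ℝ) ≤ M.card := by
    have := hM (Metric.mem_closedBall_self hR₀0.le)
    simp only [Set.mem_iUnion] at this
    obtain ⟨c, hc, _⟩ := this
    exact_mod_cast Finset.card_pos.2 ⟨c, hc⟩
  obtain ⟨r, hr0, hr1, hr⟩ := shell F u r₀ h hh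
  set Sh := F.filter (fun e => Cross u r e ∧ edgeLen e ≤ h / 2) with hSh
  set L := F.filter (fun e => ¬ InB u r e ∧ h / 2 < edgeLen e ∧ InB u R₀ e) with hL
  set P : Sym2 X → Prop := fun e => InB u r e ∨ (h / 2 < edgeLen e ∧ InB u R₀ e) with hP
  have hrR : r ≤ R₀ := by linarith
  -- the set of points to be connected
  obtain ⟨Y₁, hY₁c, hY₁⟩ := exists_verts (Sh + L)
  obtain ⟨VF, -, hVF⟩ := exists_verts F
  set Y₂ := VF.filter (fun v => v ∈ N i ∧ dist v u ≤ R₀) with hY₂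
  obtain ⟨Y₃, hY₃c, hY₃R, hY₃⟩ : ∃ Y : Finset X, Y.card ≤ 1 ∧ (∀ y ∈ Y, dist y u ≤ R₀) ∧
      ∀ v ∈ mVerts G, ∃ g ∈ mVerts G, g ∈ Y := by
    by_cases hne : (mVerts G).Nonempty
    · obtain ⟨v, hv⟩ := hne
      obtain ⟨g, hg, hgu⟩ := hG v hv
      exact ⟨{g}, by simp, by simpa using hgu, fun _ _ => ⟨g, hg, by simp⟩⟩
    · exact ⟨∅, by simp, by simp, fun v hv => absurd ⟨v, hv⟩ hne⟩
  have hY₂c : Y₂.card ≤ M.card := by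
    have hc : ∀ y ∈ Y₂, ∃ c ∈ M, dist y c ≤ ρ := by
      intro y hy
      have := hM (Metric.mem_closedBall.2 (Finset.mem_filter.1 hy).2.2)
      simpa only [Set.mem_iUnion, Metric.mem_closedBall, exists_prop] using this
    choose! f hf1 hf2 using hc
    refine Finset.card_le_card_of_injOn f hf1 ?_
    intro a ha b hb hab
    by_contra hne
    obtain ⟨j, rfl⟩ : ∃ j, i = j + 1 := ⟨i - 1, by omega⟩
    have h1 := hsep j a (Finset.mem_filter.1 ha).2.1 b (Finset.mem_filter.1 hb).2.1 hne
    have h2 := hf2 a ha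
    have h3 := hf2 b hb
    have h4 := dist_triangle a (f a) b
    rw [dist_comm (f a) b, hab] at h4
    rw [hab] at h2
    linarith
  have hY₁R : ∀ y ∈ Y₁, dist y u ≤ R₀ := by
    intro y hy
    have := (hY₁ y).1 hy
    rw [mVerts_add] at this
    rcases this with ⟨e, he, hye⟩ | ⟨e, he, hye⟩
    · obtain ⟨_, ⟨⟨x, hx, hxr⟩, _⟩, hl⟩ := Multiset.mem_filter.1 he
      have hxy : dist y x ≤ h / 2 := by
        induction e with | _ a b =>
        have hab : dist a b ≤ h / 2 := hl
        rcases Sym2.mem_iff.1 hx with rfl | rfl <;> rcases Sym2.mem_iff.1 hye with rfl | rfl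
        · rw [dist_self]; linarith
        · rwa [dist_comm]
        · exact hab
        · rw [dist_self]; linarith
      linarith [dist_triangle y x u]
    · exact Metric.mem_closedBall.1 ((Multiset.mem_filter.1 he).2.2.2 y hye)
  set Y := Y₁ ∪ Y₂ ∪ Y₃ with hY
  have hYR : ∀ y ∈ Y, dist y u ≤ R₀ := by
    intro y hy
    rw [hY, Finset.mem_union, Finset.mem_union] at hy
    rcases hy with (hy | hy) | hy
    · exact hY₁R y hy
    · exact (Finset.mem_filter.1 hy).2.2
    · exact hY₃R y hy
  have hYc : (Y.card : ℝ) ≤ 2 * (Sh.card + L.card) + M.card + 1 := by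
    have a1 : Y.card ≤ (Y₁ ∪ Y₂).card + Y₃.card := Finset.card_union_le _ _
    have a2 := Finset.card_union_le Y₁ Y₂
    rw [Multiset.card_add] at hY₁c
    have : Y.card ≤ 2 * (Sh.card + L.card) + M.card + 1 := by omega
    exact_mod_cast this
  obtain ⟨Q, hQc, hQn, hQY, hQw⟩ := star hsc hε hε1 hN0 hN hcov u R₀ ρ hρR hR₀0.le M Y hM hYR
  have hRverts : ∀ v ∈ mVerts (F.filter P), v ∈ mVerts Q ∨ dist v u ≤ r := by
    rintro v ⟨e, he, hv⟩
    obtain ⟨heF, hPe⟩ := Multiset.mem_filter.1 he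
    by_cases hin : InB u r e
    · exact Or.inr (hin v hv)
    · left
      apply hQY
      rw [hY, Finset.mem_union, Finset.mem_union]
      refine Or.inl (Or.inl ((hY₁ v).2 ?_))
      rw [mVerts_add]
      exact Or.inr ⟨e, Multiset.mem_filter.2 ⟨heF, hin, hPe.resolve_left hin⟩, hv⟩
  have hex := exchange hπ hFc hFe hFn hopt hGc hGe hGn hQc hQn
    (fun v hv => by
      obtain ⟨g, hg, hgY⟩ := hY₃ v hv
      exact ⟨g, hg, hQY g (Finset.mem_union_right _ hgY)⟩)
    (F.filter P) (F.filter (fun e => ¬ P e)) (Multiset.filter_add_not P F)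
    (by
      intro v hvR hvE
      rcases hRverts v hvR with h | hvr
      · exact h
      obtain ⟨e, he, hve⟩ := hvE
      obtain ⟨heF, hPe⟩ := Multiset.mem_filter.1 he
      simp only [hP, not_or, not_and] at hPe
      obtain ⟨hnin, hnl⟩ := hPe
      apply hQY
      rw [hY, Finset.mem_union, Finset.mem_union]
      left
      by_cases hl : edgeLen e ≤ h / 2
      · left
        rw [hY₁, mVerts_add]
        refine Or.inl ⟨e, Multiset.mem_filter.2 ⟨heF, ⟨⟨v, hve, hvr⟩, ?_⟩, hl⟩, hve⟩
        unfold InB at hnin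
        push Not at hnin
        obtain ⟨y, hy, hy'⟩ := hnin
        exact ⟨y, hy, by simpa using hy'⟩
      · right
        have hfar := hnl (not_le.1 hl)
        unfold InB at hfar
        push Not at hfar
        obtain ⟨y, hy, hy'⟩ := hfar
        have hyR : R₀ < dist y u := by simpa using hy'
        have hyv : y ≠ v := by
          rintro rfl
          linarith
        have hev : e = s(v, y) := ((Sym2.mem_and_mem_iff hyv.symm).1 ⟨hve, hy⟩)
        rw [hY₂, Finset.mem_filter]
        refine ⟨(hVF v).2 ⟨e, heF, hve⟩, ?_, by linarith⟩
        have hd : sc ^ i / ε ≤ dist v y := by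
          have := dist_triangle y v u
          rw [dist_comm y v] at this
          linarith
        have hd' : sc ^ i ≤ ε * dist v y := by
          rw [div_le_iff₀ hε] at hd; linarith
        obtain ⟨j, hj1, hj2⟩ := exists_nat_pow_near (x := ε * dist v y) (y := sc)
          ((one_le_pow₀ (by linarith)).trans hd') (by linarith)
        have hij : i < j + 1 :=
          (pow_lt_pow_iff_right₀ (by linarith : (1 : ℝ) < sc)).1 (hd'.trans_lt hj2)
        exact nets_anti hN (Nat.lt_succ_iff.1 hij) (hFn v y (hev ▸ heF) j hj1 hj2).1)
    (Metric.closedBall u r₁)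
    (fun v hv => (hRverts v hv).imp id (fun h => Metric.mem_closedBall.2 (by linarith)))
  have hwR : mWeight (restrictBall F u r) + L.card * (h / 2) ≤ mWeight (F.filter P) := by
    have e2 := congrArg mWeight (Multiset.filter_add_not (InB u r) (F.filter P))
    rw [mWeight_add, Multiset.filter_filter, Multiset.filter_filter] at e2
    have e3 : mWeight (restrictBall F u r) ≤ mWeight (F.filter (fun e => InB u r e ∧ P e)) := by
      apply mWeight_mono
      rw [restrictBall_eq]
      apply Multiset.monotone_filter_right
      exact fun e he => ⟨he, Or.inl he⟩
    have e4 : mWeight L ≤ mWeight (F.filter (fun e => ¬ InB u r e ∧ P e)) := by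
      apply mWeight_mono
      apply Multiset.monotone_filter_right
      exact fun e he => ⟨he.1, Or.inr he.2⟩
    have e5 : (L.card : ℝ) * (h / 2) ≤ mWeight L := by
      have := Multiset.card_nsmul_le_sum (s := L.map edgeLen) (a := h / 2) (by
        intro x hx
        obtain ⟨e, he, rfl⟩ := Multiset.mem_map.1 hx
        exact (Multiset.mem_filter.1 he).2.2.1.le)
      simpa [mWeight] using this
    linarith
  have hA := mWeight_mono (restrictBall_mono F u hr0)
  have hQw' : 3 * mWeight Q ≤ (Sh.card + L.card) * (h / 8) + 84 * sc * M.card * R₀ := by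
    have b1 : (Y.card : ℝ) * ρ + M.card * (2 * R₀) ≤
        2 * (Sh.card + L.card) * ρ + M.card * (4 * R₀) := by
      have : (Y.card : ℝ) * ρ ≤ (2 * (Sh.card + L.card) + M.card + 1) * ρ := by gcongr
      nlinarith
    have b2 : 7 * sc * (Y.card * ρ + M.card * (2 * R₀)) ≤
      7 * sc * (2 * (Sh.card + L.card) * ρ + M.card * (4 * R₀)) := by gcongr
    have b3 : 3 * (7 * sc * (2 * (Sh.card + L.card) * ρ + M.card * (4 * R₀))) =
      (Sh.card + L.card) * (ρ * (336 * sc) / 8) + 84 * sc * M.card * R₀ := by ring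
    rw [hρh] at b3
    linarith
  have hLn : 0 ≤ (L.card : ℝ) * h := by positivity
  linarith

end Step

lemma const_bound (k : ℕ) (hk : 0 < k) (sc ε t S : ℝ) (hsc : 4 ≤ sc) (hε : 0 < ε) (hε1 : ε < 1)
    (ht : 1 ≤ t) (hS : 0 < S) :
    4 * (84 * sc * (3 * t * S / ε) * (672 * sc * (3 * t * S / ε) / (S / (2 * k))) ^ k) ≤
      (4032 * sc * (k : ℝ) * t / ε) ^ (4032 * (k : ℝ)) * S := by
  have hk1 : (1 : ℝ) ≤ k := by exact_mod_cast hk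
  set b := 4032 * sc * (k : ℝ) * t / ε with hb
  have h1 : 672 * sc * (3 * t * S / ε) / (S / (2 * k)) = b := by
    rw [hb]; field_simp; ring
  have hskt : 1 ≤ sc * k * t := by nlinarith [mul_le_mul hsc hk1 (by norm_num) (by linarith)]
  have hb1 : 1 ≤ b := by
    rw [hb, le_div_iff₀ hε]
    nlinarith
  have h2 : 4 * (84 * sc * (3 * t * S / ε)) ≤ b * S := by
    have : 4 * (84 * sc * (3 * t * S / ε)) = (1008 * sc * t / ε) * S := by ring
    have h3 : 1008 * sc * t ≤ 4032 * sc * k * t := by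
      have : 0 ≤ sc * t := by positivity
      nlinarith
    rw [this, hb]
    exact mul_le_mul_of_nonneg_right (div_le_div_of_nonneg_right h3 hε.le) hS.le
  rw [h1]
  calc _ = 4 * (84 * sc * (3 * t * S / ε)) * b ^ k := by ring
    _ ≤ b * S * b ^ k := by gcongr
    _ = b ^ (k + 1) * S := by ring
    _ ≤ b ^ (4032 * k) * S := by
      exact mul_le_mul_of_nonneg_right (pow_le_pow_right₀ hb1 (by omega)) hS.le
    _ = _ := by
      congr 1
      rw [← Real.rpow_natCast]
      push_cast
      rfl

lemma core {X : Type*} [MetricSpace X] {k : ℕ} (hk : 0 < k)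
    (hdbl : ∀ x : X, ∀ ρ : ℝ, 0 < ρ → ∃ Cs : Finset X, Cs.card ≤ 2 ^ k ∧
      Metric.closedBall x (2 * ρ) ⊆ ⋃ c ∈ Cs, Metric.closedBall c ρ)
    {N : ℕ → Set X} {sc ε : ℝ} (hsc : 4 ≤ sc) (hε : 0 < ε) (hε1 : ε < 1)
    (hN0 : N 0 = Set.univ) (hN : ∀ i : ℕ, N (i + 1) ⊆ N i)
    (hsep : ∀ i : ℕ, ∀ a ∈ N (i + 1), ∀ b ∈ N (i + 1), a ≠ b → sc ^ (i + 1) < dist a b)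
    (hcov : ∀ i : ℕ, ∀ x ∈ N i, ∃ y ∈ N (i + 1), dist x y ≤ sc ^ (i + 1))
    {T : Finset X} {π : X → ℝ}
    (hπ : ∀ v, 0 ≤ π v) {eulerCase : Bool} {F : Multiset (Sym2 X)}
    (hFc : MConnected F) (hFe : eulerCase = true → MEulerian F) (hFn : MNetRespecting N sc ε F)
    (hopt : ∀ F' : Multiset (Sym2 X), MConnected F' → (eulerCase = true → MEulerian F') →
        MNetRespecting N sc ε F' → pcCost T π F ≤ pcCost T π F')
    {G : Multiset (Sym2 X)} (hGc : MConnected G) (hGe : eulerCase = true → MEulerian G)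
    (hGn : MNetRespecting N sc ε G) (i : ℕ) (hi : 1 ≤ i) (u : X) (t : ℝ) (ht : 1 ≤ t)
    (hG : ∀ v ∈ mVerts G, ∃ g ∈ mVerts G, dist g u ≤ (t + 1) * sc ^ i) :
    mWeight (restrictBall F u (t * sc ^ i)) ≤
      pcCost (T.filter (fun v => v ∈ Metric.closedBall u ((t + 1) * sc ^ i))) π G +
      4 * (84 * sc * (3 * t * sc ^ i / ε) *
        (672 * sc * (3 * t * sc ^ i / ε) / (sc ^ i / (2 * k))) ^ k) := by
  have hS : 0 < sc ^ i := by positivity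
  set S := sc ^ i with hSdef
  set R₀ := 3 * t * S / ε with hR₀
  have hk1 : (1 : ℝ) ≤ k := by exact_mod_cast hk
  have hR₀0 : 0 < R₀ := by positivity
  have hR₀1 : (t + 1) * S + S / ε ≤ R₀ := by
    have h1 : (t + 1) * S ≤ 2 * t * S / ε := by
      rw [le_div_iff₀ hε]
      have : (t + 1) * S ≤ 2 * t * S := by nlinarith
      have h0 : 0 ≤ (t + 1) * S := by positivity
      nlinarith
    have h2 : S / ε ≤ t * S / ε := by
      gcongr
      nlinarith
    have h3 : R₀ = 2 * t * S / ε + t * S / ε := by rw [hR₀]; ring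
    linarith
  have hSε : 0 < S / ε := by positivity
  set c := pcCost (T.filter (fun v => v ∈ Metric.closedBall u ((t + 1) * S))) π G with hc
  set q : ℝ := 1 - 1 / (2 * k) with hq
  have hk2 : 1 / (2 * (k : ℝ)) ≤ 1 / 2 := by
    apply one_div_le_one_div_of_le <;> linarith
  have hk2' : 0 < 1 / (2 * (k : ℝ)) := by positivity
  have hq0 : 0 < q := by linarith
  have hq1 : q < 1 := by linarith
  have hqk : 1 / 2 ≤ q ^ k := by
    have := one_add_mul_le_pow (a := -(1 / (2 * (k : ℝ)))) (by linarith) k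
    have h2 : 1 + (k : ℝ) * -(1 / (2 * (k : ℝ))) = 1 / 2 := by field_simp; norm_num
    rw [h2] at this
    exact this
  set h : ℕ → ℝ := fun n => S * q ^ n / (2 * k) with hh
  set r : ℕ → ℝ := fun n => t * S + S * (1 - q ^ n) with hr
  set A : ℕ → ℝ := fun n => mWeight (restrictBall F u (r n)) with hA
  set K : ℕ → ℝ := fun n => 84 * sc * R₀ * (672 * sc * R₀ / h n) ^ k with hK
  have hh0 : ∀ n, 0 < h n := fun n => by simp only [hh]; positivity
  have hrh : ∀ n, r n + h n = r (n + 1) := by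
    intro n
    simp only [hr, hh]
    have : q ^ (n + 1) = q ^ n * (1 - 1 / (2 * k)) := by rw [pow_succ]
    rw [this]
    ring
  have hK0 : ∀ n, 0 < K n := fun n => by
    have := hh0 n
    simp only [hK]; positivity
  have hKs : ∀ n, K (n + 1) ≤ 2 * K n := by
    intro n
    have h1 : h (n + 1) = q * h n := by simp only [hh]; ring
    have h2 : 672 * sc * R₀ / h (n + 1) = (672 * sc * R₀ / h n) / q := by
      rw [h1]; have := hh0 n; field_simp
    simp only [hK]
    rw [h2, div_pow, mul_div_assoc', div_le_iff₀ (by positivity)]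
    have := hK0 n
    simp only [hK] at this
    nlinarith
  have hstep : ∀ n, A n ≤ c + (A (n + 1) - A n) / 4 + K n := by
    intro n
    have hn := hh0 n
    have hqn : q ^ n ≤ 1 := pow_le_one₀ hq0.le hq1.le
    have hqn0 : 0 < q ^ n := by positivity
    have hhS : h n ≤ S := by
      simp only [hh]
      rw [div_le_iff₀ (by positivity)]
      nlinarith
    have hρ0 : 0 < h n / (336 * sc) := by positivity
    have hρR : h n / (336 * sc) ≤ R₀ := by
      have : h n / (336 * sc) ≤ h n := by
        rw [div_le_iff₀ (by positivity)]; nlinarith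
      have h5 : S ≤ (t + 1) * S := by nlinarith
      linarith
    obtain ⟨M, hM1, hM2⟩ := cover_real k hdbl u R₀ (h n / (336 * sc)) hρ0 hρR
    have hle : r n + h n ≤ (t + 1) * S := by
      rw [hrh]
      simp only [hr]
      have : 0 < S * q ^ (n + 1) := by positivity
      linarith
    have := step hsc hε hε1 hN0 hN hsep hcov hπ hFc hFe hFn hopt hGc hGe hGn i hi u (r n) (h n)
      ((t + 1) * S) R₀ (h n / (336 * sc)) hn hle hR₀1 (by positivity) rfl hhS M hM2
      (fun v hv => by
        obtain ⟨g, h1, h2⟩ := hG v hv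
        exact ⟨g, h1, by linarith⟩)
    rw [hrh n] at this
    have hMK : 84 * sc * M.card * R₀ ≤ K n := by
      have e : 2 * R₀ / (h n / (336 * sc)) = 672 * sc * R₀ / h n := by field_simp; norm_num
      rw [e] at hM1
      simp only [hK]
      calc _ = 84 * sc * R₀ * M.card := by ring
        _ ≤ _ := by gcongr
    simp only [hA]
    linarith
  have hr0 : r 0 = t * S := by simp [hr]
  have hh00 : h 0 = S / (2 * k) := by simp [hh]
  have goal : A 0 ≤ c + 4 * K 0 := by
    by_contra! hcon
    have hind : ∀ n, 4 * K n ≤ A n - c ∧ 4 ^ n * (A 0 - c) ≤ A n - c := by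
      intro n
      induction n with
      | zero => exact ⟨by linarith, by simp⟩
      | succ n ih =>
        obtain ⟨i1, i2⟩ := ih
        have h1 := hstep n
        have h2 := hKs n
        have h3 := hK0 n
        refine ⟨by linarith, ?_⟩
        rw [pow_succ]
        linarith
    have hpos : 0 < A 0 - c := by linarith [hK0 0]
    obtain ⟨n, hn⟩ := pow_unbounded_of_one_lt ((mWeight F - c) / (A 0 - c))
      (by norm_num : (1 : ℝ) < 4)
    rw [div_lt_iff₀ hpos] at hn
    have h1 := (hind n).2
    have h2 : A n ≤ mWeight F := mWeight_mono (Multiset.filter_le _ _)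
    linarith
  simp only [hA, hK, hr0, hh00] at goal
  exact goal

/-- **Local sparsity estimator.** There is a universal constant `C > 0` such that for any
metric space of doubling dimension at most `k` with hierarchical nets `N` (parameter
`s ≥ 4`, net-respecting parameter `ε ∈ (0,1)`), any prize-collecting instance `(T,π)`,
and any minimum-cost net-respecting solution `F` (a connected multigraph, additionally
Eulerian in the PCTSP case), for every `i ∈ [L]`, `u ∈ N i`, `t ≥ 1` and every
net-respecting feasible solution `G` of the sub-instance with terminal set
`T ∩ B(u,(t+1)s^i)`, one has
`w(F|_{B(u,t·s^i)}) ≤ c_{W_u^{(i,t+1)}}(G) + (C·s·k·t/ε)^{C·k} · s^i`. -/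
theorem local_sparsity_estimator : ∃ C : ℝ, 0 < C ∧
    ∀ (X : Type) [MetricSpace X], ∀ (k L : ℕ),
    (∀ x : X, ∀ ρ : ℝ, 0 < ρ → ∃ Cs : Finset X, Cs.card ≤ 2 ^ k ∧
      Metric.closedBall x (2 * ρ) ⊆ ⋃ c ∈ Cs, Metric.closedBall c ρ) →
    ∀ (N : ℕ → Set X) (sc ε : ℝ), 4 ≤ sc → 0 < ε → ε < 1 →
    N 0 = Set.univ → (∀ i : ℕ, N (i + 1) ⊆ N i) →
    (∀ i : ℕ, ∀ a ∈ N (i + 1), ∀ b ∈ N (i + 1), a ≠ b → sc ^ (i + 1) < dist a b) →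
    (∀ i : ℕ, ∀ x ∈ N i, ∃ y ∈ N (i + 1), dist x y ≤ sc ^ (i + 1)) →
    ∀ (T : Finset X) (π : X → ℝ), (∀ v, 0 ≤ π v) →
    -- `eulerCase` distinguishes PCTSP (solutions must in addition be Eulerian)
    -- from PCSTP (solutions are connected multigraphs).
    ∀ (eulerCase : Bool) (F : Multiset (Sym2 X)),
      MConnected F → (eulerCase = true → MEulerian F) → MNetRespecting N sc ε F →
      (∀ F' : Multiset (Sym2 X), MConnected F' → (eulerCase = true → MEulerian F') →
        MNetRespecting N sc ε F' → pcCost T π F ≤ pcCost T π F') →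
    ∀ i : ℕ, 1 ≤ i → i ≤ L → ∀ u ∈ N i, ∀ t : ℝ, 1 ≤ t →
    ∀ G : Multiset (Sym2 X), MConnected G → (eulerCase = true → MEulerian G) →
      MNetRespecting N sc ε G →
      mWeight (restrictBall F u (t * sc ^ i)) ≤
        pcCost (T.filter (fun v => v ∈ Metric.closedBall u ((t + 1) * sc ^ i))) π G +
          (C * sc * (k : ℝ) * t / ε) ^ (C * (k : ℝ)) * sc ^ i := by
  refine ⟨4032, by norm_num, ?_⟩
  intro X _ k L hdbl N sc ε hsc hε hε1 hN0 hN hsep hcov T π hπ eulerCase F hFc hFe hFn hopt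
    i hi _ u _ t ht G hGc hGe hGn
  rcases Nat.eq_zero_or_pos k with hk | hk
  · subst hk
    have hd : ∀ x y : X, dist x y = 0 := by
      intro x y
      by_contra hne
      have hpos : 0 < dist x y := lt_of_le_of_ne dist_nonneg (Ne.symm hne)
      obtain ⟨Cs, h1, h2⟩ := cover_real 0 hdbl x (dist x y) (dist x y / 4) (by linarith)
        (by linarith)
      have hx := h2 (Metric.mem_closedBall_self hpos.le)
      have hy := h2 (Metric.mem_closedBall.2 (dist_comm y x).le)
      simp only [Set.mem_iUnion, Metric.mem_closedBall, exists_prop] at hx hy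
      obtain ⟨a, ha, hxa⟩ := hx
      obtain ⟨b, hb, hyb⟩ := hy
      have hc : Cs.card ≤ 1 := by
        rw [pow_zero] at h1
        exact_mod_cast h1
      have hab : a = b := Finset.card_le_one.1 hc a ha b hb
      subst hab
      linarith [dist_triangle_right x y a]
    have hw : mWeight (restrictBall F u (t * sc ^ i)) = 0 := by
      unfold mWeight
      apply Multiset.sum_eq_zero
      intro a ha
      obtain ⟨e, _, rfl⟩ := Multiset.mem_map.1 ha
      induction e with | _ x y => exact hd x y
    rw [hw]
    have h1 : 0 ≤ pcCost (T.filter (fun v => v ∈ Metric.closedBall u ((t + 1) * sc ^ i))) π G :=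
      add_nonneg (mWeight_nonneg _) (Finset.sum_nonneg fun v _ => hπ v)
    have h2 : (0 : ℝ) ≤ (4032 * sc * ((0 : ℕ) : ℝ) * t / ε) ^ (4032 * ((0 : ℕ) : ℝ)) * sc ^ i := by
      simp
      positivity
    linarith
  have hfinal : ∀ G : Multiset (Sym2 X), MConnected G → (eulerCase = true → MEulerian G) →
      MNetRespecting N sc ε G →
      (∀ v ∈ mVerts G, ∃ g ∈ mVerts G, dist g u ≤ (t + 1) * sc ^ i) →
      mWeight (restrictBall F u (t * sc ^ i)) ≤
        pcCost (T.filter (fun v => v ∈ Metric.closedBall u ((t + 1) * sc ^ i))) π G +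
          (4032 * sc * (k : ℝ) * t / ε) ^ (4032 * (k : ℝ)) * sc ^ i := by
    intro G hGc hGe hGn hG
    refine (core hk hdbl hsc hε hε1 hN0 hN hsep hcov hπ hFc hFe hFn hopt hGc hGe hGn i hi u t ht
      hG).trans ?_
    exact add_le_add le_rfl (const_bound k hk sc ε t (sc ^ i) hsc hε hε1 ht (by positivity))
  by_cases hG : ∃ g ∈ mVerts G, dist g u ≤ (t + 1) * sc ^ i
  · exact hfinal G hGc hGe hGn (fun _ _ => hG)
  · push Not at hG
    have hv0 : mVerts (0 : Multiset (Sym2 X)) = ∅ := by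
      ext v
      simp [mVerts]
    refine (hfinal 0 ?_ ?_ ?_ ?_).trans ?_
    · intro x hx
      rw [hv0] at hx
      exact absurd hx (Set.notMem_empty _)
    · intro _ x hx
      rw [hv0] at hx
      exact absurd hx (Set.notMem_empty _)
    · intro x y hxy
      exact absurd hxy (Multiset.notMem_zero _)
    · intro x hx
      rw [hv0] at hx
      exact absurd hx (Set.notMem_empty _)
    · gcongr
      unfold pcCost
      refine add_le_add ?_ ?_
      · simpa [mWeight] using mWeight_nonneg G
      · apply Finset.sum_le_sum_of_subset_of_nonneg
        · intro v hv
          rw [Finset.mem_filter] at hv ⊢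
          refine ⟨hv.1, fun hvG => ?_⟩
          have h1 := Metric.mem_closedBall.1 (Finset.mem_filter.1 hv.1).2
          exact absurd h1 (not_le.2 (hG v hvG))
        · exact fun v _ _ => hπ v
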